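/- arXiv:1211.2533 — 2 statements merged into one kernel-verified Lean document; each statement's English description precedes it below -/
import Mathlib

section
/- The integral $K_3 = 16\int_{-\pi/12}^{\pi/12} \frac{\cos^2(2\theta)\,\sin^2(\tfrac{\pi}{6}+2\theta)\,\sin^2(\tfrac{\pi}{6}-2\theta)\,\sin^2(\tfrac{5\pi}{12})}{\sin^2(\tfrac{5\pi}{12}-\theta)}\,d\theta$ is strictly less than $\frac{2+\sqrt{3}}{6}\cdot\frac{\pi}{6}$. -/
open Real MeasureTheory

/-!
The triple-angle product `cos x · sin (π/6 + x) · sin (π/6 - x) = cos (3x) / 4` turns `W(θ)` into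
`cos² (6θ) / 16`, with integral `π/192`. For `|θ| ≤ π/12` the angle `5π/12 - θ` lies in
`[π/3, π/2]`, so `sin² (5π/12 - θ) ≥ sin² (π/3) = 3/4`, with equality only at `θ = π/12`. Replacing
the denominator by `3/4` yields exactly the right-hand side, because `sin² (5π/12) = (2 + √3) / 4`.
-/

lemma sin_sq_sub_sin_sq (x y : ℝ) : sin x ^ 2 - sin y ^ 2 = sin (x + y) * sin (x - y) := by
  rw [sin_add, sin_sub]
  linear_combination sin y ^ 2 * sin_sq_add_cos_sq x - sin x ^ 2 * sin_sq_add_cos_sq y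

lemma sin_sq_le_sin_sq_of_mem_Icc {α x : ℝ} (hα : 0 ≤ α) (hx : x ∈ Set.Icc α (π - α)) :
    sin α ^ 2 ≤ sin x ^ 2 := by
  obtain ⟨hαx, hxα⟩ := hx
  rw [← sub_nonneg, sin_sq_sub_sin_sq]
  exact mul_nonneg (sin_nonneg_of_nonneg_of_le_pi (by linarith) (by linarith))
    (sin_nonneg_of_nonneg_of_le_pi (by linarith) (by linarith))

lemma sin_sq_lt_sin_sq_of_mem_Ioo {α x : ℝ} (hα : 0 ≤ α) (hx : x ∈ Set.Ioo α (π - α)) :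
    sin α ^ 2 < sin x ^ 2 := by
  obtain ⟨hαx, hxα⟩ := hx
  rw [← sub_pos, sin_sq_sub_sin_sq]
  exact mul_pos (sin_pos_of_pos_of_lt_pi (by linarith) (by linarith))
    (sin_pos_of_pos_of_lt_pi (by linarith) (by linarith))

lemma cos_mul_sin_mul_sin_eq_cos_three_mul (x : ℝ) :
    cos x * sin (π / 6 + x) * sin (π / 6 - x) = cos (3 * x) / 4 := by
  rw [mul_assoc, ← sin_sq_sub_sin_sq, sin_pi_div_six, sin_sq, cos_three_mul]
  ring

lemma cos_two_mul_sq_mul_sin_sq_mul_sin_sq (θ : ℝ) :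
    cos (2 * θ) ^ 2 * sin (π / 6 + 2 * θ) ^ 2 * sin (π / 6 - 2 * θ) ^ 2 =
      cos (6 * θ) ^ 2 / 16 := by
  rw [← mul_pow, ← mul_pow, cos_mul_sin_mul_sin_eq_cos_three_mul]
  ring_nf

lemma sq_sin_five_pi_div_twelve : sin (5 * π / 12) ^ 2 = (2 + √3) / 4 := by
  have hcos : cos (2 * (5 * π / 12)) = -(√3 / 2) := by
    rw [← cos_pi_div_six, ← cos_pi_sub]
    ring_nf
  rw [sin_sq_eq_half_sub, hcos]
  ring

lemma integral_cos_mul_sq {c : ℝ} (hc : c ≠ 0) :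
    ∫ x in -(π / (2 * c))..π / (2 * c), cos (c * x) ^ 2 = π / (2 * c) := by
  have hright : c * (π / (2 * c)) = π / 2 := by field_simp
  rw [intervalIntegral.integral_comp_mul_left (fun x ↦ cos x ^ 2) hc, mul_neg, hright,
    integral_cos_sq, cos_neg, cos_pi_div_two, smul_eq_mul]
  field

lemma integral_div_lt_div_of_le {f g : ℝ → ℝ} {a b m : ℝ} (hab : a < b) (hm : 0 < m)
    (hf : ContinuousOn f (Set.Icc a b)) (hg : ContinuousOn g (Set.Icc a b))
    (hf_nonneg : ∀ x ∈ Set.Icc a b, 0 ≤ f x) (hmg : ∀ x ∈ Set.Icc a b, m ≤ g x)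
    (hlt : ∃ c ∈ Set.Icc a b, 0 < f c ∧ m < g c) :
    ∫ x in a..b, f x / g x < (∫ x in a..b, f x) / m := by
  rw [← intervalIntegral.integral_div]
  refine intervalIntegral.integral_lt_integral_of_continuousOn_of_le_of_exists_lt hab
    (hf.div hg fun x hx ↦ (hm.trans_le (hmg x hx)).ne') (hf.div_const m) (fun x hx ↦ ?_) ?_
  · have hx' := Set.Ioc_subset_Icc_self hx
    exact div_le_div_of_nonneg_left (hf_nonneg x hx') hm (hmg x hx')
  · obtain ⟨c, hc, hfc, hmc⟩ := hlt
    exact ⟨c, hc, div_lt_div_of_pos_left hfc hm hmc⟩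

lemma integral_div_sin_sq_sub_lt {f : ℝ → ℝ} {a b α β : ℝ} (hab : a < b) (hα : 0 < α)
    (ha : β - (π - α) ≤ a) (hb : b ≤ β - α) (hf : ContinuousOn f (Set.Icc a b))
    (hf_nonneg : ∀ θ ∈ Set.Icc a b, 0 ≤ f θ) (hf_pos : ∃ c ∈ Set.Ioo a b, 0 < f c) :
    ∫ θ in a..b, f θ / sin (β - θ) ^ 2 < (∫ θ in a..b, f θ) / sin α ^ 2 := by
  have hsin : 0 < sin α := sin_pos_of_pos_of_lt_pi hα (by linarith)
  refine integral_div_lt_div_of_le hab (pow_pos hsin 2) hf (by fun_prop) hf_nonneg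
    (fun θ hθ ↦ ?_) ?_
  · exact sin_sq_le_sin_sq_of_mem_Icc hα.le ⟨by linarith [hθ.2], by linarith [hθ.1]⟩
  · obtain ⟨c, hc, hfc⟩ := hf_pos
    exact ⟨c, Set.Ioo_subset_Icc_self hc, hfc,
      sin_sq_lt_sin_sq_of_mem_Ioo hα.le ⟨by linarith [hc.2], by linarith [hc.1]⟩⟩

/-- `K₃ = 16 ∫ W(θ) sin²(5π/12)/sin²(5π/12-θ) dθ < ((2+√3)/6)·(π/6)`, where
`W(θ) = cos²(2θ) sin²(π/6+2θ) sin²(π/6-2θ)`. -/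
theorem stmt4 :
    (16 : ℝ) * (∫ θ in (-(π/12))..(π/12),
      (cos (2*θ))^2 * (sin (π/6 + 2*θ))^2 * (sin (π/6 - 2*θ))^2 * (sin (5*π/12))^2
        / (sin (5*π/12 - θ))^2)
    < (2 + Real.sqrt 3) / 6 * (π/6) := by
  have hπ := pi_pos
  have hintegral : ∫ θ in -(π / 12)..π / 12, cos (6 * θ) ^ 2 = π / 12 := by
    convert integral_cos_mul_sq (c := 6) (by norm_num) using 2 <;> ring
  have hsin : 0 < sin (5 * π / 12) := sin_pos_of_pos_of_lt_pi (by linarith) (by linarith)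
  simp only [cos_two_mul_sq_mul_sin_sq_mul_sin_sq]
  calc 16 * ∫ θ in -(π / 12)..π / 12,
        cos (6 * θ) ^ 2 / 16 * sin (5 * π / 12) ^ 2 / sin (5 * π / 12 - θ) ^ 2
      < 16 * ((∫ θ in -(π / 12)..π / 12, cos (6 * θ) ^ 2 / 16 * sin (5 * π / 12) ^ 2) /
          sin (π / 3) ^ 2) := by
        gcongr
        exact integral_div_sin_sq_sub_lt (by linarith) (by linarith) (by linarith) (by linarith)
          (by fun_prop) (fun θ _ ↦ by positivity)
          ⟨0, ⟨by linarith, by linarith⟩, by simp [pow_pos hsin]⟩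
    _ = (2 + √3) / 6 * (π / 6) := by
        rw [intervalIntegral.integral_mul_const, intervalIntegral.integral_div, hintegral,
          sq_sin_five_pi_div_twelve, sq_sin_pi_div_three]
        ring
end

section
/- Let $I_2$ be the $2\times 2$ identity matrix, $J = \begin{pmatrix}0&-1\\1&0\end{pmatrix}$, and for real $\phi$ set $R(\phi) = \cos\phi\, I_2 + \sin\phi\, J$. For real $t,s$ define the $10\times 10$ real matrix $A(t,s)$ in $2\times 2$ blocks $(B_{pq})_{p,q=1}^5$ by: $B_{11} = \sqrt{3}\cos t\, I_2$, $B_{15} = \sqrt{3}\sin t\, R(\tfrac{\pi}{2}-s)$, $B_{51} = \sqrt{3}\sin t\, R(s-\tfrac{\pi}{2})$, $B_{55} = -\sqrt{3}\cos t\, I_2$, $B_{22} = \frac{1}{\sqrt{3}}\cos t\, I_2$, $B_{24} = \frac{1}{\sqrt{3}}\sin t\, R(\tfrac{\pi}{2}-s)$, $B_{42} = \frac{1}{\sqrt{3}}\sin t\, R(s-\tfrac{\pi}{2})$, $B_{44} = -\frac{1}{\sqrt{3}}\cos t\, I_2$, and all other blocks zero. Then $\det(xI_{10} - A(t,s)) =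 x^2(x^2-3)^2\big(x^2-\tfrac13\big)^2$; in particular the eigenvalues of $A(t,s)$ are $\sqrt{3}, \frac{1}{\sqrt{3}}, 0, -\frac{1}{\sqrt{3}}, -\sqrt{3}$, each with multiplicity $2$. -/
/-!
The `2 × 2` blocks of `A(t,s)` are real multiples of rotations, that is, matrices of multiplications
by complex numbers on `ℂ = ℝ²`. Hence `A(t,s)` is the real form of a `5 × 5` Hermitian matrix `H`,
and `det (x - A(t,s)) = |det (x - H)|²`, which is why every principal curvature has multiplicity
`2`. In `H` row `1` is coupled only with row `5` and row `2` only with row `4`, and each pair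
contributes `x² - k² cos² t - k² sin² t = x² - k²`, because the off-diagonal phases `e^{iφ}` and
`e^{-iφ}` cancel.
-/

open Real Matrix

/-- Assemble a `5 × 5` array of `2 × 2` blocks into a `10 × 10` matrix. -/
def ofBlocks (M : Matrix (Fin 5) (Fin 5) (Matrix (Fin 2) (Fin 2) ℝ)) :
    Matrix (Fin 10) (Fin 10) ℝ := fun i j =>
  M ⟨i.val / 2, by have := i.isLt; omega⟩ ⟨j.val / 2, by have := j.isLt; omega⟩
    ⟨i.val % 2, by omega⟩ ⟨j.val % 2, by omega⟩

/-- `J = [[0,-1],[1,0]]`. -/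
def Jmat : Matrix (Fin 2) (Fin 2) ℝ := !![0, -1; 1, 0]

/-- The rotation `R(φ) = cos φ · I₂ + sin φ · J`. -/
noncomputable def R (φ : ℝ) : Matrix (Fin 2) (Fin 2) ℝ := Real.cos φ • 1 + Real.sin φ • Jmat

/-- The shape operator `A(t,s)` of the focal submanifold `M₁` (`g = 6`, `(m₁,m₂) = (2,2)`),
given in `2 × 2` blocks: `B₁₁ = √3 cos t I`, `B₁₅ = √3 sin t R(π/2-s)`, `B₅₁ = √3 sin t R(s-π/2)`,
`B₅₅ = -√3 cos t I`, `B₂₂ = (1/√3) cos t I`, `B₂₄ = (1/√3) sin t R(π/2-s)`,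
`B₄₂ = (1/√3) sin t R(s-π/2)`, `B₄₄ = -(1/√3) cos t I`, other blocks zero. -/
noncomputable def A (t s : ℝ) : Matrix (Fin 10) (Fin 10) ℝ :=
  ofBlocks !![(Real.sqrt 3 * Real.cos t) • 1, 0, 0, 0, (Real.sqrt 3 * Real.sin t) • R (π/2 - s);
              0, ((1 / Real.sqrt 3) * Real.cos t) • 1, 0,
                ((1 / Real.sqrt 3) * Real.sin t) • R (π/2 - s), 0;
              0, 0, 0, 0, 0;
              0, ((1 / Real.sqrt 3) * Real.sin t) • R (s - π/2), 0,
                (-((1 / Real.sqrt 3) * Real.cos t)) • 1, 0;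
              (Real.sqrt 3 * Real.sin t) • R (s - π/2), 0, 0, 0,
                (-(Real.sqrt 3 * Real.cos t)) • 1]

section RestrictScalars

variable {α β n ι : Type*} [CommRing α] [CommRing β] [Algebra α β]
  [Fintype n] [DecidableEq n] [Fintype ι] [DecidableEq ι]

/-- Restriction of scalars for square matrices: each entry in `β` is replaced by the matrix, in the
basis `b` of `β` over `α`, of multiplication by that entry. -/
noncomputable def matrixRestrictScalars (b : Module.Basis ι α β) :
    Matrix n n β →ₐ[α] Matrix (n × ι) (n × ι) α :=
  (compAlgEquiv n ι α α).toAlgHom.comp (Algebra.leftMulMatrix b).mapMatrix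

lemma det_matrixRestrictScalars (b : Module.Basis ι α β) (M : Matrix n n β) :
    (matrixRestrictScalars b M).det = Algebra.norm α M.det := by
  rw [Algebra.norm_eq_matrix_det b]
  exact (det_det M (Algebra.leftMulMatrix b).toRingHom).symm

lemma det_smul_one_sub_matrixRestrictScalars (b : Module.Basis ι α β) (M : Matrix n n β) (x : α) :
    (x • 1 - matrixRestrictScalars b M).det = Algebra.norm α (x • 1 - M).det := by
  rw [← det_matrixRestrictScalars b, map_sub, map_smul, map_one]

end RestrictScalars

lemma leftMulMatrix_exp_ofReal_mul_I (φ : ℝ) :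
    Algebra.leftMulMatrix Complex.basisOneI (Complex.exp (φ * Complex.I)) = R φ := by
  rw [Algebra.leftMulMatrix_complex, Complex.exp_ofReal_mul_I_re, Complex.exp_ofReal_mul_I_im]
  ext i j
  fin_cases i <;> fin_cases j <;> simp [R, Jmat]

lemma det_smul_one_sub_ofBlocks_leftMulMatrix (M : Matrix (Fin 5) (Fin 5) ℂ) (x : ℝ) :
    (x • 1 - ofBlocks (M.map (Algebra.leftMulMatrix Complex.basisOneI))).det =
      Complex.normSq (x • 1 - M).det := by
  have reindexed : x • 1 - ofBlocks (M.map (Algebra.leftMulMatrix Complex.basisOneI)) =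
      reindexAlgEquiv ℝ ℝ finProdFinEquiv
        (x • 1 - matrixRestrictScalars Complex.basisOneI M) := by
    rw [map_sub, map_smul, map_one]
    rfl
  rw [reindexed, det_reindexAlgEquiv, det_smul_one_sub_matrixRestrictScalars,
    Algebra.norm_complex_apply]

/-- The Hermitian matrix whose real form is the shape operator: the pair of coordinates `1, 5`
carries the principal curvatures `±k`, the pair `2, 4` carries `±l`. -/
noncomputable def hermitianShape (k l t φ : ℝ) : Matrix (Fin 5) (Fin 5) ℂ :=
  let u := Complex.exp (φ * Complex.I)
  let v := Complex.exp ((-φ : ℝ) * Complex.I)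
  !![(k * cos t) • 1, 0, 0, 0, (k * sin t) • u;
     0, (l * cos t) • 1, 0, (l * sin t) • u, 0;
     0, 0, 0, 0, 0;
     0, (l * sin t) • v, 0, (-(l * cos t)) • 1, 0;
     (k * sin t) • v, 0, 0, 0, (-(k * cos t)) • 1]

lemma A_eq_ofBlocks_hermitianShape (t s : ℝ) :
    A t s = ofBlocks ((hermitianShape (√3) (1 / √3) t (π / 2 - s)).map
      (Algebra.leftMulMatrix Complex.basisOneI)) := by
  rw [A, ← neg_sub (π / 2) s, ← leftMulMatrix_exp_ofReal_mul_I, ← leftMulMatrix_exp_ofReal_mul_I]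
  congr 1
  ext1 i j
  fin_cases i <;> fin_cases j <;>
    simp [hermitianShape, -Complex.real_smul, -map_mul]

lemma det_fin_five_cross {α : Type*} [CommRing α] (a b c d a' b' c' d' e : α) :
    det !![a, 0, 0, 0, b; 0, a', 0, b', 0; 0, 0, e, 0, 0; 0, c', 0, d', 0; c, 0, 0, 0, d] =
      e * (a * d - b * c) * (a' * d' - b' * c') := by
  simp [det_succ_row_zero, Fin.sum_univ_succ, Fin.succAbove]
  ring

lemma det_smul_one_sub_hermitianShape (k l t φ x : ℝ) :
    (x • 1 - hermitianShape k l t φ).det = ((x * (x ^ 2 - k ^ 2) * (x ^ 2 - l ^ 2) : ℝ) : ℂ) := by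
  set u := Complex.exp (φ * Complex.I) with hu
  set v := Complex.exp ((-φ : ℝ) * Complex.I) with hv
  have phases_cancel : u * v = 1 := by
    rw [hu, hv, ← Complex.exp_add]
    simp
  have pair_det (m : ℝ) : (x - m * Complex.cos t) * (x + m * Complex.cos t) -
      -(m * Complex.sin t * u) * -(m * Complex.sin t * v) = x ^ 2 - m ^ 2 := by
    linear_combination (-(m : ℂ) ^ 2 * Complex.sin t ^ 2) * phases_cancel
      - (m : ℂ) ^ 2 * Complex.sin_sq_add_cos_sq t
  have entries : x • 1 - hermitianShape k l t φ =
      !![x - k * Complex.cos t, 0, 0, 0, -(k * Complex.sin t * u);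
         0, x - l * Complex.cos t, 0, -(l * Complex.sin t * u), 0;
         0, 0, (x : ℂ), 0, 0;
         0, -(l * Complex.sin t * v), 0, x + l * Complex.cos t, 0;
         -(k * Complex.sin t * v), 0, 0, 0, x + k * Complex.cos t] := by
    ext i j
    fin_cases i <;> fin_cases j <;> simp [hermitianShape, u, v]
  rw [entries, det_fin_five_cross, pair_det, pair_det]
  norm_cast

/-- The characteristic polynomial of `A(t,s)` is `x²(x²-3)²(x²-1/3)²`; in particular the
eigenvalues of `A(t,s)` are `√3, 1/√3, 0, -1/√3, -√3`, each with multiplicity `2`,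
independently of `(t,s)`. -/
theorem stmt11 (t s x : ℝ) :
    Matrix.det (x • (1 : Matrix (Fin 10) (Fin 10) ℝ) - A t s)
      = x^2 * (x^2 - 3)^2 * (x^2 - 1/3)^2 := by
  have sq_sqrt_three : √(3 : ℝ) ^ 2 = 3 := sq_sqrt (by norm_num)
  rw [A_eq_ofBlocks_hermitianShape, det_smul_one_sub_ofBlocks_leftMulMatrix,
    det_smul_one_sub_hermitianShape, Complex.normSq_ofReal, div_pow, sq_sqrt_three]
  ring
end
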